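/- Let s be a real number which is not an integer, and let a, z > 0 be real numbers with a ≠ 1. Then f_q(z q^{s}, a) tends to a^{−⌊s⌋}/(a − 1) as q tends to 0 from the right (q ranging over (0,1)), where ⌊s⌋ is the integer floor of s. In particular, for non-integer s this limit is independent of z. -/

import Mathlib

open Filter Topology

/-- The q-theta function
`θ_q(x) = (x^{1/2} - x^{-1/2}) ∏_{i=1}^∞ (1 - x q^i)(1 - x⁻¹ q^i)`. -/
noncomputable def qTheta (q x : ℝ) : ℝ :=
  (Real.sqrt x - (Real.sqrt x)⁻¹) *
    ∏' i : ℕ, (1 - x * q ^ (i + 1)) * (1 - x⁻¹ * q ^ (i + 1))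

/-- `f_q(z, a) = θ_q(a z) / (θ_q(a) θ_q(z))`. -/
noncomputable def fTheta (q z a : ℝ) : ℝ :=
  qTheta q (a * z) / (qTheta q a * qTheta q z)

/-- The `q`-Pochhammer symbol. -/
noncomputable def qPoch (q u : ℝ) : ℝ := ∏' i : ℕ, (1 + -(u * q ^ i))

lemma qPoch_summable {q : ℝ} (h0 : 0 < q) (h1 : q < 1) (u : ℝ) :
    Summable (fun i : ℕ => ‖-(u * q ^ i)‖) := by
  have := (summable_geometric_of_lt_one h0.le h1).mul_left |u|
  refine this.congr fun i => ?_
  simp [abs_mul, abs_of_pos h0]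

lemma qPoch_mult {q : ℝ} (h0 : 0 < q) (h1 : q < 1) (u : ℝ) :
    Multipliable (fun i : ℕ => 1 + -(u * q ^ i)) :=
  multipliable_one_add_of_summable (qPoch_summable h0 h1 u)

lemma qPoch_step {q : ℝ} (h0 : 0 < q) (h1 : q < 1) (u : ℝ) :
    qPoch q u = (1 - u) * qPoch q (u * q) := by
  have e : ∀ i : ℕ, 1 + -(u * q * q ^ i) = 1 + -(u * q ^ (i + 1)) := fun i => by ring
  have h : Multipliable (fun i : ℕ => 1 + -(u * q ^ (i + 1))) :=
    (qPoch_mult h0 h1 (u * q)).congr e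
  have h2 := tprod_eq_zero_mul' (f := fun i : ℕ => 1 + -(u * q ^ i)) h
  have h3 : qPoch q (u * q) = ∏' i : ℕ, (1 + -(u * q ^ (i + 1))) := tprod_congr e
  rw [h3, qPoch, h2, pow_zero, mul_one, sub_eq_add_neg]

lemma qPoch_bound {q : ℝ} (h0 : 0 < q) (h1 : q < 1) (u : ℝ) :
    ‖qPoch q u - 1‖ ≤ Real.exp (|u| * (1 - q)⁻¹) - 1 := by
  have hs := qPoch_summable h0 h1 u
  have hsum : ∑' i : ℕ, ‖-(u * q ^ i)‖ = |u| * (1 - q)⁻¹ := by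
    rw [← tsum_geometric_of_lt_one h0.le h1, ← tsum_mul_left]
    congr 1; funext i; simp [abs_mul, abs_of_pos h0]
  have ht : Tendsto (fun t : Finset ℕ => ‖∏ i ∈ t, (1 + -(u * q ^ i)) - 1‖) atTop
      (𝓝 ‖qPoch q u - 1‖) :=
    ((qPoch_mult h0 h1 u).hasProd.sub_const 1).norm
  refine le_of_tendsto ht (Eventually.of_forall fun t => ?_)
  refine (Finset.norm_prod_one_add_sub_one_le t _).trans ?_
  have := hs.sum_le_tsum t (fun i _ => norm_nonneg _)
  rw [hsum] at this
  gcongr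

lemma qPoch_tendsto (u : ℝ → ℝ) (hu : Tendsto u (𝓝[Set.Ioo (0:ℝ) 1] 0) (𝓝 0)) :
    Tendsto (fun q => qPoch q (u q)) (𝓝[Set.Ioo (0:ℝ) 1] 0) (𝓝 1) := by
  rw [tendsto_iff_norm_sub_tendsto_zero]
  have hq : Tendsto (fun q : ℝ => q) (𝓝[Set.Ioo (0:ℝ) 1] 0) (𝓝 0) :=
    tendsto_nhdsWithin_of_tendsto_nhds tendsto_id
  have h : Tendsto (fun q => Real.exp (|u q| * (1 - q)⁻¹) - 1) (𝓝[Set.Ioo (0:ℝ) 1] 0) (𝓝 0) := by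
    have h2 := hu.abs.mul ((hq.const_sub 1).inv₀ (by norm_num))
    have h3 := ((Real.continuous_exp.tendsto _).comp h2).sub_const 1
    simpa using h3
  refine squeeze_zero' (Eventually.of_forall fun _ => norm_nonneg _) ?_ h
  filter_upwards [self_mem_nhdsWithin] with q hq
  exact qPoch_bound hq.1 hq.2 _

lemma qTheta_eq {q x : ℝ} (h0 : 0 < q) (h1 : q < 1) (hx : 0 < x) :
    qTheta q x = (x - 1) * (qPoch q (x * q) * qPoch q (x⁻¹ * q)) / Real.sqrt x := by
  have e : ∏' i : ℕ, (1 - x * q ^ (i + 1)) * (1 - x⁻¹ * q ^ (i + 1))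
      = qPoch q (x * q) * qPoch q (x⁻¹ * q) := by
    unfold qPoch
    rw [← (qPoch_mult h0 h1 _).tprod_mul (qPoch_mult h0 h1 _)]
    congr 1; funext i; ring
  have hs : 0 < Real.sqrt x := Real.sqrt_pos.2 hx
  have hsq : Real.sqrt x ^ 2 = x := Real.sq_sqrt hx.le
  rw [qTheta, e]
  have : Real.sqrt x - (Real.sqrt x)⁻¹ = (x - 1) / Real.sqrt x := by
    field_simp
    rw [hsq]
  rw [this]; ring

lemma qTheta_step {q x : ℝ} (h0 : 0 < q) (h1 : q < 1) (hx : 0 < x) :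
    qTheta q (q * x) = -(Real.sqrt q * x)⁻¹ * qTheta q x := by
  rw [qTheta_eq h0 h1 hx, qTheta_eq h0 h1 (mul_pos h0 hx), Real.sqrt_mul h0.le]
  have e1 : (q * x)⁻¹ * q = x⁻¹ := by field_simp
  have e2 : q * x * q = x * q * q := by ring
  rw [e1, e2, qPoch_step h0 h1 x⁻¹, qPoch_step h0 h1 (x * q)]
  have hs : 0 < Real.sqrt x := Real.sqrt_pos.2 hx
  have hs' : 0 < Real.sqrt q := Real.sqrt_pos.2 h0
  field_simp
  ring

lemma fTheta_step {q w a : ℝ} (h0 : 0 < q) (h1 : q < 1) (hw : 0 < w) (ha : 0 < a) :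
    fTheta q (q * w) a = a⁻¹ * fTheta q w a := by
  have hs' : 0 < Real.sqrt q := Real.sqrt_pos.2 h0
  have e : a * (q * w) = q * (a * w) := by ring
  rw [fTheta, fTheta, e, qTheta_step h0 h1 hw, qTheta_step h0 h1 (mul_pos ha hw)]
  generalize qTheta q (a * w) = A
  generalize qTheta q a = B
  generalize qTheta q w = C
  have : -(Real.sqrt q * (a * w))⁻¹ = a⁻¹ * -(Real.sqrt q * w)⁻¹ := by field_simp
  rw [this]
  have hn : -(Real.sqrt q * w)⁻¹ ≠ 0 := neg_ne_zero.2 (by positivity)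
  generalize -(Real.sqrt q * w)⁻¹ = D at hn
  rw [show B * (D * C) = D * (B * C) by ring, show a⁻¹ * D * A = D * (a⁻¹ * A) by ring,
    mul_div_mul_left _ _ hn, mul_div_assoc]

lemma fTheta_zpow {q a : ℝ} (h0 : 0 < q) (h1 : q < 1) (ha : 0 < a) (n : ℤ) :
    ∀ w : ℝ, 0 < w → fTheta q (q ^ n * w) a = a ^ (-n) * fTheta q w a := by
  induction n using Int.induction_on with
  | zero => intro w hw; simp
  | succ i ih =>
    intro w hw
    rw [zpow_add_one₀ h0.ne', mul_assoc, ih _ (mul_pos h0 hw), fTheta_step h0 h1 hw ha,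
      neg_add, zpow_add₀ ha.ne', zpow_neg_one, mul_assoc]
  | pred i ih =>
    intro w hw
    have hw' : 0 < q⁻¹ * w := by positivity
    have := fTheta_step h0 h1 hw' ha
    rw [mul_inv_cancel_left₀ h0.ne'] at this
    rw [zpow_sub_one₀ h0.ne', mul_assoc, ih _ hw', this, neg_sub, sub_eq_add_neg,
      zpow_add₀ ha.ne', zpow_one]
    field_simp

lemma fTheta_eq {q w a : ℝ} (h0 : 0 < q) (h1 : q < 1) (hw : 0 < w) (ha : 0 < a) :
    fTheta q w a = ((a * w - 1) * (qPoch q (a * w * q) * qPoch q ((a * w)⁻¹ * q))) /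
      (((a - 1) * (qPoch q (a * q) * qPoch q (a⁻¹ * q))) *
        ((w - 1) * (qPoch q (w * q) * qPoch q (w⁻¹ * q)))) := by
  have hs : 0 < Real.sqrt a := Real.sqrt_pos.2 ha
  have hs' : 0 < Real.sqrt w := Real.sqrt_pos.2 hw
  rw [fTheta, qTheta_eq h0 h1 hw, qTheta_eq h0 h1 ha, qTheta_eq h0 h1 (mul_pos ha hw),
    Real.sqrt_mul ha.le, div_mul_div_comm, div_div_div_cancel_right₀ (mul_pos hs hs').ne']

lemma rpow_tendsto_zero {t : ℝ} (ht : 0 < t) (c : ℝ) :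
    Tendsto (fun q : ℝ => c * q ^ t) (𝓝[Set.Ioo (0:ℝ) 1] 0) (𝓝 0) := by
  have h := ((Real.continuousAt_rpow_const 0 t (Or.inr ht.le)).tendsto).const_mul c
  rw [Real.zero_rpow ht.ne', mul_zero] at h
  exact tendsto_nhdsWithin_of_tendsto_nhds h

lemma fTheta_tendsto {t a z : ℝ} (ht0 : 0 < t) (ht1 : t < 1) (ha : 0 < a) (hz : 0 < z)
    (ha1 : a ≠ 1) :
    Tendsto (fun q : ℝ => fTheta q (z * q ^ t) a) (𝓝[Set.Ioo (0:ℝ) 1] 0) (𝓝 (1 / (a - 1))) := by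
  have hq : Tendsto (fun q : ℝ => q) (𝓝[Set.Ioo (0:ℝ) 1] 0) (𝓝 0) :=
    tendsto_nhdsWithin_of_tendsto_nhds tendsto_id
  have hw := rpow_tendsto_zero ht0 z
  have hinv : ∀ c : ℝ, Tendsto (fun q : ℝ => (c * q ^ t)⁻¹ * q) (𝓝[Set.Ioo (0:ℝ) 1] 0) (𝓝 0) := by
    intro c
    refine (rpow_tendsto_zero (sub_pos.2 ht1) c⁻¹).congr' ?_
    filter_upwards [self_mem_nhdsWithin] with q hq
    rw [Real.rpow_sub hq.1, Real.rpow_one, mul_inv]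
    ring
  have hu : ∀ c : ℝ, Tendsto (fun q : ℝ => c * q) (𝓝[Set.Ioo (0:ℝ) 1] 0) (𝓝 0) := by
    intro c; simpa using hq.const_mul c
  have haw : Tendsto (fun q : ℝ => a * (z * q ^ t)) (𝓝[Set.Ioo (0:ℝ) 1] 0) (𝓝 0) := by
    simpa using hw.const_mul a
  have p1 := qPoch_tendsto (fun q => a * (z * q ^ t) * q) (by simpa using haw.mul hq)
  have p2 := qPoch_tendsto (fun q => (a * (z * q ^ t))⁻¹ * q)
    (by simpa only [mul_assoc] using hinv (a * z))
  have p3 := qPoch_tendsto _ (hu a)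
  have p4 := qPoch_tendsto _ (hu a⁻¹)
  have p5 := qPoch_tendsto (fun q => (z * q ^ t) * q) (by simpa using hw.mul hq)
  have p6 := qPoch_tendsto _ (hinv z)
  have ha2 : a - 1 ≠ 0 := sub_ne_zero.2 ha1
  have key := ((haw.sub_const 1).mul (p1.mul p2)).div
    (((p3.mul p4).const_mul (a - 1)).mul ((hw.sub_const 1).mul (p5.mul p6)))
    (by simp only [mul_one, zero_sub]; exact mul_ne_zero ha2 (by norm_num))
  have e : (0 - 1) * (1 * 1) / ((a - 1) * (1 * 1) * ((0 - 1) * (1 * 1))) = 1 / (a - 1) := by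
    field_simp
  rw [e] at key
  refine key.congr' ?_
  filter_upwards [self_mem_nhdsWithin] with q hq
  exact (fTheta_eq hq.1 hq.2 (mul_pos hz (Real.rpow_pos_of_pos hq.1 t)) ha).symm

/-- For non-integer real `s` and reals `a, z > 0` with `a ≠ 1`,
`f_q(z q^s, a) → a^{-⌊s⌋} / (a - 1)` as `q → 0⁺`, with `q` ranging over `(0,1)`.
In particular, for non-integer `s` the limit is independent of `z`. -/
theorem fTheta_limit_nonintegral (s : ℝ) (hs : ∀ k : ℤ, s ≠ (k : ℝ))
    (a z : ℝ) (ha : 0 < a) (hz : 0 < z) (ha1 : a ≠ 1) :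
    Tendsto (fun q : ℝ => fTheta q (z * q ^ s) a)
      (𝓝[Set.Ioo (0:ℝ) 1] 0) (𝓝 (a ^ (-⌊s⌋) / (a - 1))) := by
  have ht0 : 0 < s - ⌊s⌋ :=
    lt_of_le_of_ne (sub_nonneg.2 (Int.floor_le s)) (fun h => hs ⌊s⌋ (by linarith))
  have ht1 : s - ⌊s⌋ < 1 := by linarith [Int.lt_floor_add_one s]
  have h := (fTheta_tendsto ht0 ht1 ha hz ha1).const_mul (a ^ (-⌊s⌋))
  rw [mul_one_div] at h
  refine h.congr' ?_
  filter_upwards [self_mem_nhdsWithin] with q hq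
  rw [← fTheta_zpow hq.1 hq.2 ha ⌊s⌋ _ (mul_pos hz (Real.rpow_pos_of_pos hq.1 _))]
  congr 1
  rw [Real.rpow_sub hq.1, Real.rpow_intCast]
  have := (zpow_pos hq.1 ⌊s⌋).ne'
  field_simp
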